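/- Let K be the reference tetrahedron in ℝ³ and let p ≥ 1 be an integer. Let Σ = {Φ ∈ (P_p)³ : Φ·n = 0 on ∂K} and let D = {div Φ : Φ ∈ Σ}. Then every polynomial q ∈ P_{p−1} admits a unique decomposition q = c + r with c a constant and r ∈ D; moreover ∫_K r dx = 0, so that the decomposition P_{p−1} = ℝ·1 ⊕ D is orthogonal in L²(K). -/

import Mathlib

open MeasureTheory MvPolynomial Real

noncomputable section

/-- Vertices of the reference tetrahedron: v0=(0,0,0), v1=(1,0,0), v2=(0,1,0), v3=(0,0,1). -/
def vtx : Fin 4 → Fin 3 → ℝ :=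
  ![![0,0,0], ![1,0,0], ![0,1,0], ![0,0,1]]

/-- Barycentric coordinates λ₀ = 1-x-y-z, λ₁ = x, λ₂ = y, λ₃ = z. -/
def lam : Fin 4 → (Fin 3 → ℝ) → ℝ :=
  ![fun x => 1 - x 0 - x 1 - x 2, fun x => x 0, fun x => x 1, fun x => x 2]

/-- The reference tetrahedron K = {x : λ_j(x) ≥ 0 for all j}. -/
def Ktet : Set (Fin 3 → ℝ) := {x | ∀ j : Fin 4, 0 ≤ lam j x}

/-- Face F_j = {x ∈ K : λ_j(x) = 0}. -/
def faceK (j : Fin 4) : Set (Fin 3 → ℝ) := {x ∈ Ktet | lam j x = 0}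

/-- Outward unit normals of the four faces of K. -/
def normalK : Fin 4 → Fin 3 → ℝ :=
  ![fun _ => 1 / Real.sqrt 3, ![-1,0,0], ![0,-1,0], ![0,0,-1]]

/-- (Constant) gradients of the barycentric coordinates. -/
def gradLam : Fin 4 → Fin 3 → ℝ :=
  ![![-1,-1,-1], ![1,0,0], ![0,1,0], ![0,0,1]]

/-- Divergence of a vector polynomial. -/
def divP (Φ : Fin 3 → MvPolynomial (Fin 3) ℝ) : MvPolynomial (Fin 3) ℝ :=
  ∑ i, MvPolynomial.pderiv i (Φ i)

/-- The normal component of the vector polynomial Φ vanishes on every face of K. -/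
def normalVanish (Φ : Fin 3 → MvPolynomial (Fin 3) ℝ) : Prop :=
  ∀ j : Fin 4, ∀ q ∈ faceK j, ∑ i, MvPolynomial.eval q (Φ i) * normalK j i = 0

/-- Divergence of a vector field (as a function). -/
def divF (Φ : (Fin 3 → ℝ) → (Fin 3 → ℝ)) (x : Fin 3 → ℝ) : ℝ :=
  ∑ i, fderiv ℝ Φ x (Pi.single i 1) i

/-- The normal component of the vector field Φ vanishes on every face of K. -/
def normalVanishF (Φ : (Fin 3 → ℝ) → (Fin 3 → ℝ)) : Prop :=
  ∀ j : Fin 4, ∀ q ∈ faceK j, ∑ i, Φ q i * normalK j i = 0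

/-! The divergence theorem on the simplex shows that `∫ div Φ = 0` for every field `Φ` tangent to
the boundary, so the only constant in `D` is zero and the decomposition is unique. By Fubini, each
`∂ᵢ Φᵢ` integrates to a difference of values on the slanted facet and on the facet `xᵢ = 0`, where
`Φᵢ` vanishes. The slanted facet is parametrised by omitting the coordinate `i`, and passing from
one omitted coordinate to another exchanges two vertices of the parameter simplex, which preserves
volume; so the slanted contributions add up to the integral of `∑ i, Φᵢ = 0`.

For existence, the field `x ↦ xᵢ f(x) (eᵢ - x)` is tangent to the boundary and, by Euler's
identity, for homogeneous `f` of degree `d` its divergence is `∂ᵢ(xᵢ f) - (1 + d + n) xᵢ f`. So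
modulo `D` the monomial multiple `xᵢ f` is proportional to `∂ᵢ(xᵢ f)`, of lower degree, and by
Euler's identity again every homogeneous polynomial of positive degree is a combination of such
products. -/

section CornerSimplex

variable (ι : Type*) [Fintype ι]

/-- The simplex in `ι → ℝ` spanned by the origin and the standard basis vectors. -/
def cornerSimplex : Set (ι → ℝ) :=
  {x | (∀ i, 0 ≤ x i) ∧ ∑ i, x i ≤ 1}

theorem isClosed_cornerSimplex : IsClosed (cornerSimplex ι) := by
  simp only [cornerSimplex, Set.ofPred_and, Set.ofPred_forall]
  exact (isClosed_iInter fun i ↦ isClosed_le continuous_const (continuous_apply i)).inter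
    (isClosed_le (by fun_prop) continuous_const)

theorem isCompact_cornerSimplex : IsCompact (cornerSimplex ι) := by
  refine (isCompact_Icc (a := (0 : ι → ℝ)) (b := 1)).of_isClosed_subset
    (isClosed_cornerSimplex ι) fun x hx ↦ ⟨hx.1, fun i ↦ ?_⟩
  exact (Finset.single_le_sum (fun j _ ↦ hx.1 j) (Finset.mem_univ i)).trans hx.2

theorem measurableSet_cornerSimplex : MeasurableSet (cornerSimplex ι) :=
  (isClosed_cornerSimplex ι).measurableSet

theorem volume_real_cornerSimplex_pos : 0 < volume.real (cornerSimplex ι) := by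
  let U : Set (ι → ℝ) := {x | (∀ i, 0 < x i) ∧ ∑ i, x i < 1}
  have hU : IsOpen U := by
    simp only [U, Set.ofPred_and, Set.ofPred_forall]
    exact (isOpen_iInter_of_finite fun i ↦ isOpen_lt continuous_const (continuous_apply i)).inter
      (isOpen_lt (by fun_prop) continuous_const)
  have barycenter_mem : (fun _ ↦ (Fintype.card ι + 1 : ℝ)⁻¹) ∈ U := by
    refine ⟨fun _ ↦ by positivity, ?_⟩
    rw [Finset.sum_const, Finset.card_univ, nsmul_eq_mul, ← div_eq_mul_inv,
      div_lt_one (by positivity)]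
    exact lt_add_one _
  have hUK : U ⊆ cornerSimplex ι := fun x hx ↦ ⟨fun i ↦ (hx.1 i).le, hx.2.le⟩
  exact ENNReal.toReal_pos ((hU.measure_pos volume ⟨_, barycenter_mem⟩).trans_le
    (measure_mono hUK)).ne' (isCompact_cornerSimplex ι).measure_ne_top

variable {ι}

theorem integrableOn_cornerSimplex {E : Type*} [NormedAddCommGroup E] {f : (ι → ℝ) → E}
    (hf : Continuous f) : IntegrableOn f (cornerSimplex ι) :=
  hf.continuousOn.integrableOn_compact (isCompact_cornerSimplex ι)

/-- The vector field `Φ` is tangent to every facet of the corner simplex. The slanted facet has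
normal direction `(1, …, 1)`, so there the condition is that the components of `Φ` sum to zero. -/
def IsTangential (Φ : (ι → ℝ) → ι → ℝ) : Prop :=
  ∀ x ∈ cornerSimplex ι,
    (∀ i, x i = 0 → Φ x i = 0) ∧ (∑ i, x i = 1 → ∑ i, Φ x i = 0)

theorem IsTangential.add {Φ Ψ : (ι → ℝ) → ι → ℝ} (hΦ : IsTangential Φ) (hΨ : IsTangential Ψ) :
    IsTangential fun x i ↦ Φ x i + Ψ x i := fun x hx ↦
  ⟨fun i hi ↦ by simp [(hΦ x hx).1 i hi, (hΨ x hx).1 i hi],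
    fun hsum ↦ by simp [Finset.sum_add_distrib, (hΦ x hx).2 hsum, (hΨ x hx).2 hsum]⟩

theorem IsTangential.const_mul (a : ℝ) {Φ : (ι → ℝ) → ι → ℝ} (hΦ : IsTangential Φ) :
    IsTangential fun x i ↦ a * Φ x i := fun x hx ↦
  ⟨fun i hi ↦ by simp [(hΦ x hx).1 i hi],
    fun hsum ↦ by simp [← Finset.mul_sum, (hΦ x hx).2 hsum]⟩

end CornerSimplex

section VertexSwap

theorem measurePreserving_of_involutive {E : Type*} [NormedAddCommGroup E] [NormedSpace ℝ E]
    [MeasurableSpace E] [BorelSpace E] [FiniteDimensional ℝ E] (μ : Measure E)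
    [μ.IsAddHaarMeasure] {L : E →ₗ[ℝ] E} (hL : Function.Involutive L) :
    MeasurePreserving L μ μ := by
  have det_sq : LinearMap.det L * LinearMap.det L = 1 := by
    rw [← LinearMap.det_comp, show L ∘ₗ L = .id from LinearMap.ext hL, LinearMap.det_id]
  have abs_det : |(LinearMap.det L)⁻¹| = 1 := by
    rcases mul_self_eq_one_iff.1 det_sq with h | h <;> simp [h]
  refine ⟨L.continuous_of_finiteDimensional.measurable, ?_⟩
  rw [Measure.map_linearMap_addHaar_eq_smul_addHaar μ (left_ne_zero_of_mul_eq_one det_sq),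
    abs_det, ENNReal.ofReal_one, one_smul]

variable {ι : Type*} [Fintype ι] [DecidableEq ι]

/-- The affine involution of the corner simplex exchanging the origin with the `k`-th basis vector,
that is, exchanging the barycentric coordinates `1 - ∑ i, y i` and `y k`. -/
def vertexSwap (k : ι) (y : ι → ℝ) : ι → ℝ :=
  Function.update y k (1 - ∑ i, y i)

theorem one_sub_sum_vertexSwap (k : ι) (y : ι → ℝ) : 1 - ∑ i, vertexSwap k y i = y k := by
  rw [vertexSwap, Finset.sum_update_of_mem (Finset.mem_univ k),
    ← Finset.add_sum_erase _ y (Finset.mem_univ k), Finset.sdiff_singleton_eq_erase]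
  ring

theorem involutive_vertexSwap (k : ι) : Function.Involutive (vertexSwap k) := fun y ↦ by
  rw [vertexSwap, one_sub_sum_vertexSwap, vertexSwap, Function.update_idem,
    Function.update_eq_self]

theorem vertexSwap_mem_cornerSimplex {k : ι} {y : ι → ℝ} (hy : y ∈ cornerSimplex ι) :
    vertexSwap k y ∈ cornerSimplex ι := by
  refine ⟨fun i ↦ ?_, sub_nonneg.1 ((one_sub_sum_vertexSwap k y).symm ▸ hy.1 k)⟩
  rcases eq_or_ne i k with rfl | hik
  · simpa [vertexSwap] using hy.2
  · simpa [vertexSwap, hik] using hy.1 i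

theorem vertexSwap_preimage_cornerSimplex (k : ι) :
    vertexSwap k ⁻¹' cornerSimplex ι = cornerSimplex ι :=
  Set.Subset.antisymm
    (fun y hy ↦ involutive_vertexSwap k y ▸ vertexSwap_mem_cornerSimplex hy)
    fun _ ↦ vertexSwap_mem_cornerSimplex

theorem measurePreserving_vertexSwap (k : ι) :
    MeasurePreserving (vertexSwap k) volume volume := by
  let coord (i : ι) : Module.Dual ℝ (ι → ℝ) := LinearMap.proj i
  let ℓ : Module.Dual ℝ (ι → ℝ) := (∑ i, coord i) + coord k
  have ℓ_apply (y : ι → ℝ) : ℓ y = ∑ i, y i + y k := by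
    simp [ℓ, coord, LinearMap.sum_apply]
  have hℓ : ℓ (Pi.single k 1) = 2 := by
    rw [ℓ_apply, Finset.sum_pi_single', if_pos (Finset.mem_univ k), Pi.single_eq_same,
      one_add_one_eq_two]
  have vertexSwap_eq : vertexSwap k = (Pi.single k 1 + ·) ∘ Module.reflection hℓ := by
    ext y i
    rcases eq_or_ne i k with rfl | hik
    · simp only [vertexSwap, Function.update_self, Function.comp_apply, Module.reflection_apply,
        ℓ_apply, Pi.add_apply, Pi.sub_apply, Pi.smul_apply, Pi.single_eq_same, smul_eq_mul]
      ring
    · simp [vertexSwap, Module.reflection_apply, hik]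
  rw [vertexSwap_eq]
  exact (measurePreserving_add_left volume _).comp
    (measurePreserving_of_involutive volume (L := (Module.reflection hℓ).toLinearMap)
      (Module.involutive_reflection hℓ))

theorem setIntegral_comp_vertexSwap {E : Type*} [NormedAddCommGroup E] [NormedSpace ℝ E]
    (k : ι) (g : (ι → ℝ) → E) :
    ∫ y in cornerSimplex ι, g (vertexSwap k y) = ∫ y in cornerSimplex ι, g y := by
  have hemb : MeasurableEmbedding (vertexSwap k) :=
    (MeasurableEquiv.ofInvolutive _ (involutive_vertexSwap k)
      (measurePreserving_vertexSwap k).measurable).measurableEmbedding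
  simpa only [vertexSwap_preimage_cornerSimplex] using
    (measurePreserving_vertexSwap k).setIntegral_preimage_emb hemb g (cornerSimplex ι)

end VertexSwap

section DivergenceTheorem

variable {n : ℕ} {E : Type*} [NormedAddCommGroup E] [NormedSpace ℝ E]

theorem insertNth_mem_cornerSimplex {i : Fin (n + 1)} {t : ℝ} {y : Fin n → ℝ} :
    i.insertNth t y ∈ cornerSimplex (Fin (n + 1)) ↔
      y ∈ cornerSimplex (Fin n) ∧ t ∈ Set.Icc 0 (1 - ∑ j, y j) := by
  simp only [cornerSimplex, Set.mem_ofPred_eq, i.forall_iff_succAbove, Fin.sum_univ_succAbove _ i,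
    Fin.insertNth_apply_same, Fin.insertNth_apply_succAbove, Set.mem_Icc]
  constructor
  · rintro ⟨⟨ht, hy⟩, h⟩
    exact ⟨⟨hy, by linarith⟩, ht, by linarith⟩
  · rintro ⟨⟨hy, -⟩, ht, h⟩
    exact ⟨⟨ht, hy⟩, by linarith⟩

theorem setIntegral_cornerSimplex_succ (i : Fin (n + 1)) {f : (Fin (n + 1) → ℝ) → E}
    (hf : Continuous f) :
    ∫ x in cornerSimplex (Fin (n + 1)), f x =
      ∫ y in cornerSimplex (Fin n), ∫ t in 0..1 - ∑ j, y j, f (i.insertNth t y) := by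
  let e := (MeasurableEquiv.piFinSuccAbove (fun _ : Fin (n + 1) ↦ ℝ) i).symm
  have he : MeasurePreserving e := (volume_preserving_piFinSuccAbove (fun _ ↦ ℝ) i).symm
  have hint : Integrable ((cornerSimplex (Fin (n + 1))).indicator f ∘ e) :=
    (he.integrable_comp_emb e.measurableEmbedding).2
      ((integrable_indicator_iff (measurableSet_cornerSimplex _)).2 (integrableOn_cornerSimplex hf))
  have fiber (y : Fin n → ℝ) :
      ∫ t, (cornerSimplex (Fin (n + 1))).indicator f (e (t, y)) =
        (cornerSimplex (Fin n)).indicator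
          (fun y ↦ ∫ t in 0..1 - ∑ j, y j, f (i.insertNth t y)) y := by
    by_cases hy : y ∈ cornerSimplex (Fin n)
    · rw [Set.indicator_of_mem hy, intervalIntegral.integral_of_le (sub_nonneg.2 hy.2),
        ← integral_Icc_eq_integral_Ioc, ← integral_indicator measurableSet_Icc]
      congr 1 with t
      simp only [Set.indicator, show e (t, y) = i.insertNth t y from rfl,
        insertNth_mem_cornerSimplex, hy, true_and]
    · rw [Set.indicator_of_notMem hy]
      refine integral_eq_zero_of_ae (.of_forall fun t ↦ Set.indicator_of_notMem ?_ f)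
      exact fun h ↦ hy (insertNth_mem_cornerSimplex.1 h).1
  calc ∫ x in cornerSimplex (Fin (n + 1)), f x
      = ∫ z, (cornerSimplex (Fin (n + 1))).indicator f (e z) := by
        rw [← integral_indicator (measurableSet_cornerSimplex _),
          he.integral_comp e.measurableEmbedding]
    _ = ∫ y, ∫ t, (cornerSimplex (Fin (n + 1))).indicator f (e (t, y)) :=
        integral_prod_symm _ hint
    _ = _ := by simp_rw [fiber, integral_indicator (measurableSet_cornerSimplex _)]

theorem hasDerivAt_insertNth (i : Fin (n + 1)) (y : Fin n → ℝ) (t : ℝ) :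
    HasDerivAt (fun s : ℝ ↦ (i.insertNth s y : Fin (n + 1) → ℝ)) (Pi.single i 1) t := by
  convert hasDerivAt_update (i.insertNth 0 y : Fin (n + 1) → ℝ) i t with s
  exact (Fin.update_insertNth (α := fun _ ↦ ℝ) i 0 s y).symm

theorem setIntegral_fderiv_single [CompleteSpace E] (i : Fin (n + 1)) {f : (Fin (n + 1) → ℝ) → E}
    (hf : ContDiff ℝ 1 f) :
    ∫ x in cornerSimplex (Fin (n + 1)), fderiv ℝ f x (Pi.single i 1) =
      ∫ y in cornerSimplex (Fin n),
        (f (i.insertNth (1 - ∑ j, y j) y) - f (i.insertNth 0 y)) := by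
  have hf' : Continuous fun x ↦ fderiv ℝ f x (Pi.single i 1) :=
    (hf.continuous_fderiv one_ne_zero).clm_apply continuous_const
  rw [setIntegral_cornerSimplex_succ i hf']
  congr 1 with y
  have hfiber : Continuous fun t : ℝ ↦ (i.insertNth t y : Fin (n + 1) → ℝ) :=
    continuous_iff_continuousAt.2 fun t ↦ (hasDerivAt_insertNth i y t).continuousAt
  have hderiv (t : ℝ) : HasDerivAt (fun t : ℝ ↦ f (i.insertNth t y))
      (fderiv ℝ f (i.insertNth t y) (Pi.single i 1)) t :=
    (hf.differentiable one_ne_zero _).hasFDerivAt.comp_hasDerivAt t (hasDerivAt_insertNth i y t)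
  exact intervalIntegral.integral_eq_sub_of_hasDerivAt (fun t _ ↦ hderiv t)
    ((hf'.comp hfiber).intervalIntegrable _ _)

theorem insertNth_castSucc_vertexSwap (k : Fin n) (y : Fin n → ℝ) :
    (k.castSucc.insertNth (1 - ∑ j, vertexSwap k y j) (vertexSwap k y) : Fin (n + 1) → ℝ) =
      k.succ.insertNth (1 - ∑ j, y j) y := by
  rw [one_sub_sum_vertexSwap]
  refine Fin.insertNth_eq_iff.2 ⟨?_, funext fun j ↦ ?_⟩
  · rw [← Fin.succAbove_succ_self k, Fin.insertNth_apply_succAbove]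
  · rw [Fin.removeNth]
    rcases lt_trichotomy j k with hjk | rfl | hjk
    · rw [Fin.succAbove_castSucc_of_lt _ _ hjk, ← Fin.succAbove_succ_of_le _ _ hjk.le,
        Fin.insertNth_apply_succAbove, vertexSwap, Function.update_of_ne hjk.ne]
    · rw [Fin.succAbove_castSucc_self, Fin.insertNth_apply_same, vertexSwap, Function.update_self]
    · rw [Fin.succAbove_castSucc_of_le _ _ hjk.le, ← Fin.succAbove_succ_of_lt _ _ hjk,
        Fin.insertNth_apply_succAbove, vertexSwap, Function.update_of_ne hjk.ne']

theorem setIntegral_slantedFacet_eq (g : (Fin (n + 1) → ℝ) → E) (i : Fin (n + 1)) :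
    ∫ y in cornerSimplex (Fin n), g (i.insertNth (1 - ∑ j, y j) y) =
      ∫ y in cornerSimplex (Fin n), g (Fin.insertNth 0 (1 - ∑ j, y j) y) := by
  induction i using Fin.induction with
  | zero => rfl
  | succ k ih =>
    rw [← ih, ← setIntegral_comp_vertexSwap k fun y ↦ g (k.castSucc.insertNth (1 - ∑ j, y j) y)]
    simp only [insertNth_castSucc_vertexSwap]

theorem setIntegral_divergence_eq_zero {Φ : (Fin n → ℝ) → Fin n → ℝ} (hΦ : ContDiff ℝ 1 Φ)
    (htan : IsTangential Φ) :
    ∫ x in cornerSimplex (Fin n), ∑ i, fderiv ℝ (Φ · i) x (Pi.single i 1) = 0 := by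
  cases n with
  | zero => simp only [Finset.univ_eq_empty, Finset.sum_empty, integral_zero]
  | succ n =>
    have hΦi (i) : ContDiff ℝ 1 (Φ · i) := contDiff_pi.1 hΦ i
    have on_facet {i : Fin (n + 1)} {y : Fin n → ℝ} (hy : y ∈ cornerSimplex (Fin n)) :
        Φ (i.insertNth 0 y) i = 0 :=
      (htan _ (insertNth_mem_cornerSimplex.2 ⟨hy, le_rfl, sub_nonneg.2 hy.2⟩)).1 i (by simp)
    have on_slantedFacet {y : Fin n → ℝ} (hy : y ∈ cornerSimplex (Fin n)) :
        ∑ i, Φ (Fin.insertNth 0 (1 - ∑ j, y j) y) i = 0 :=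
      (htan _ (insertNth_mem_cornerSimplex.2 ⟨hy, sub_nonneg.2 hy.2, le_rfl⟩)).2
        (by simp [Fin.sum_univ_succ])
    have flux (i : Fin (n + 1)) :
        ∫ x in cornerSimplex (Fin (n + 1)), fderiv ℝ (Φ · i) x (Pi.single i 1) =
          ∫ y in cornerSimplex (Fin n), Φ (Fin.insertNth 0 (1 - ∑ j, y j) y) i := by
      rw [setIntegral_fderiv_single i (hΦi i), ← setIntegral_slantedFacet_eq (Φ · i) i]
      refine setIntegral_congr_fun (measurableSet_cornerSimplex _) fun y hy ↦ ?_
      simp only [on_facet hy, sub_zero]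
    have slantedFacet_continuous : Continuous fun y : Fin n → ℝ ↦
        (Fin.insertNth 0 (1 - ∑ j, y j) y : Fin (n + 1) → ℝ) :=
      Continuous.finInsertNth 0 (by fun_prop) continuous_id
    calc ∫ x in cornerSimplex (Fin (n + 1)), ∑ i, fderiv ℝ (Φ · i) x (Pi.single i 1)
        = ∑ i, ∫ y in cornerSimplex (Fin n), Φ (Fin.insertNth 0 (1 - ∑ j, y j) y) i := by
          rw [integral_finsetSum _ fun i _ ↦ integrableOn_cornerSimplex
            (((hΦi i).continuous_fderiv one_ne_zero).clm_apply continuous_const)]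
          exact Finset.sum_congr rfl fun i _ ↦ flux i
      _ = ∫ y in cornerSimplex (Fin n), ∑ i, Φ (Fin.insertNth 0 (1 - ∑ j, y j) y) i :=
          (integral_finsetSum _ fun i _ ↦ integrableOn_cornerSimplex
            ((hΦi i).continuous.comp slantedFacet_continuous)).symm
      _ = 0 := setIntegral_eq_zero_of_forall_eq_zero fun y hy ↦ on_slantedFacet hy

end DivergenceTheorem

section PolynomialFields

theorem fderiv_eval_single {𝕜 ι : Type*} [NontriviallyNormedField 𝕜] [CompleteSpace 𝕜] [Finite ι]
    [DecidableEq ι] (f : MvPolynomial ι 𝕜) (x : ι → 𝕜) (i : ι) :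
    fderiv 𝕜 (eval · f) x (Pi.single i 1) = eval x (pderiv i f) := by
  have := Fintype.ofFinite ι
  have hdiff (g : MvPolynomial ι 𝕜) : DifferentiableAt 𝕜 (eval · g) x :=
    (AnalyticOnNhd.eval_mvPolynomial g x trivial).differentiableAt
  induction f using MvPolynomial.induction_on with
  | C a => simp
  | add f g hf hg =>
    simp only [map_add]
    rw [fderiv_fun_add (hdiff f) (hdiff g), add_apply, hf, hg]
  | mul_X f j hf =>
    simp only [map_mul, eval_X]
    rw [fderiv_fun_mul (hdiff f) (differentiableAt_apply j x)]
    simp [hf, fderiv_apply, pderiv_X, Pi.single_apply, eq_comm, apply_ite]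

variable (ι : Type*) [Fintype ι]

/-- The divergence of polynomial vector fields. -/
def polyDivergence (R : Type*) [CommSemiring R] :
    (ι → MvPolynomial ι R) →ₗ[R] MvPolynomial ι R :=
  ∑ i, (pderiv i).toLinearMap ∘ₗ LinearMap.proj i

/-- The space `Σ` of polynomial vector fields of degree at most `p` that are tangent to the
boundary of the corner simplex. -/
def tangentialFields (p : ℕ) : Submodule ℝ (ι → MvPolynomial ι ℝ) where
  carrier := {Φ | (∀ i, (Φ i).totalDegree ≤ p) ∧ IsTangential fun x i ↦ eval x (Φ i)}
  zero_mem' := by simp [IsTangential]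
  add_mem' hΦ hΨ :=
    ⟨fun i ↦ (totalDegree_add _ _).trans (max_le (hΦ.1 i) (hΨ.1 i)),
      by simpa using hΦ.2.add hΨ.2⟩
  smul_mem' a _ hΦ :=
    ⟨fun i ↦ (totalDegree_smul_le _ _).trans (hΦ.1 i), by simpa using hΦ.2.const_mul a⟩

/-- The space `D` of divergences of the fields in `Σ`. -/
def tangentialDivergences (p : ℕ) : Submodule ℝ (MvPolynomial ι ℝ) :=
  (tangentialFields ι p).map (polyDivergence ι ℝ)

variable {ι}

theorem polyDivergence_apply {R : Type*} [CommSemiring R] (Φ : ι → MvPolynomial ι R) :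
    polyDivergence ι R Φ = ∑ i, pderiv i (Φ i) := by
  simp [polyDivergence, LinearMap.sum_apply]

theorem setIntegral_eval_eq_zero_of_mem_tangentialDivergences {n p : ℕ}
    {r : MvPolynomial (Fin n) ℝ} (hr : r ∈ tangentialDivergences (Fin n) p) :
    ∫ x in cornerSimplex (Fin n), eval x r = 0 := by
  obtain ⟨Φ, ⟨-, htan⟩, rfl⟩ := hr
  have hΦ : ContDiff ℝ 1 fun x i ↦ eval x (Φ i) :=
    contDiff_pi.2 fun i ↦ (AnalyticOnNhd.eval_mvPolynomial (Φ i)).contDiff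
  simpa [polyDivergence_apply, fderiv_eval_single] using setIntegral_divergence_eq_zero hΦ htan

theorem eq_zero_of_C_mem_tangentialDivergences {n p : ℕ} {c : ℝ}
    (hc : C c ∈ tangentialDivergences (Fin n) p) : c = 0 := by
  have h := setIntegral_eval_eq_zero_of_mem_tangentialDivergences hc
  simpa [(volume_real_cornerSimplex_pos (Fin n)).ne'] using h

end PolynomialFields

section Existence

variable {ι : Type*}

/-- The vector field `x ↦ xᵢ f(x) (eᵢ - x)`, directed towards the vertex `eᵢ`. -/
def vertexField [DecidableEq ι] {R : Type*} [CommRing R] (i : ι) (f : MvPolynomial ι R) (j : ι) :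
    MvPolynomial ι R :=
  X i * f * ((if j = i then 1 else 0) - X j)

variable [Fintype ι]

theorem isTangential_vertexField [DecidableEq ι] (i : ι) (f : MvPolynomial ι ℝ) :
    IsTangential fun x j ↦ eval x (vertexField i f j) := by
  refine fun x _ ↦ ⟨fun j hj ↦ ?_, fun hsum ↦ ?_⟩
  · rcases eq_or_ne j i with rfl | hji
    · simp [vertexField, hj]
    · simp [vertexField, hj, hji]
  · simp [vertexField, ← Finset.mul_sum, hsum, apply_ite]

theorem vertexField_mem_tangentialFields [DecidableEq ι] (i : ι) {d p : ℕ} {f : MvPolynomial ι ℝ}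
    (hf : f.totalDegree ≤ d) (hp : d + 2 ≤ p) :
    vertexField i f ∈ tangentialFields ι p := by
  refine ⟨fun j ↦ ?_, isTangential_vertexField i f⟩
  have hXf : (X i * f).totalDegree ≤ 1 + d := (totalDegree_mul _ _).trans (by simpa using hf)
  have hlin : ((if j = i then 1 else 0) - X j : MvPolynomial ι ℝ).totalDegree ≤ 1 := by
    refine (totalDegree_sub _ _).trans (max_le ?_ (totalDegree_X j).le)
    split_ifs <;> simp
  exact (totalDegree_mul _ _).trans (by omega)

theorem polyDivergence_vertexField [DecidableEq ι] {R : Type*} [CommRing R] (i : ι) {d : ℕ}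
    {f : MvPolynomial ι R} (hf : f.IsHomogeneous d) :
    polyDivergence ι R (vertexField i f) =
      pderiv i (X i * f) - (1 + d + Fintype.card ι) • (X i * f) := by
  have hterm (j : ι) : pderiv j (vertexField i f j) =
      (if j = i then 1 else 0) * pderiv j (X i * f) - X j * pderiv j (X i * f) - X i * f := by
    have hconst : pderiv j (if j = i then 1 else 0 : MvPolynomial ι R) = 0 := by
      split_ifs <;> simp
    rw [vertexField, pderiv_mul, map_sub, hconst, pderiv_X_self]
    ring
  have euler : ∑ j, X j * pderiv j (X i * f) = (1 + d) • (X i * f) :=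
    ((isHomogeneous_X R i).mul hf).sum_X_mul_pderiv
  rw [polyDivergence_apply, add_smul _ (Fintype.card ι), ← sub_sub]
  simp only [hterm, Finset.sum_sub_distrib, euler, Finset.sum_const, Finset.card_univ, ite_mul,
    one_mul, zero_mul, Finset.sum_ite_eq', Finset.mem_univ, if_true]

theorem X_mul_mem_one_sup_tangentialDivergences (i : ι) {d p : ℕ} {f : MvPolynomial ι ℝ}
    (hf : f.IsHomogeneous d) (hp : d + 2 ≤ p)
    (hderiv : pderiv i (X i * f) ∈ 1 ⊔ tangentialDivergences ι p) :
    X i * f ∈ 1 ⊔ tangentialDivergences ι p := by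
  classical
  have hdiv : polyDivergence ι ℝ (vertexField i f) ∈ 1 ⊔ tangentialDivergences ι p :=
    Submodule.mem_sup_right ⟨_, vertexField_mem_tangentialFields i hf.totalDegree_le hp, rfl⟩
  have h := Submodule.sub_mem _ hderiv hdiv
  rw [polyDivergence_vertexField i hf, sub_sub_cancel, ← Nat.cast_smul_eq_nsmul ℝ] at h
  exact (Submodule.smul_mem_iff _ (by positivity)).1 h

theorem isHomogeneous_mem_one_sup_tangentialDivergences {d p : ℕ} (hd : d < p)
    {f : MvPolynomial ι ℝ} (hf : f.IsHomogeneous d) :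
    f ∈ 1 ⊔ tangentialDivergences ι p := by
  induction d generalizing f with
  | zero =>
    obtain ⟨c, rfl⟩ : ∃ c, f = C c :=
      ⟨_, totalDegree_eq_zero_iff_eq_C.1 (Nat.le_zero.1 hf.totalDegree_le)⟩
    exact Submodule.mem_sup_left (Submodule.mem_one.2 ⟨c, rfl⟩)
  | succ d ih =>
    have hterm (i : ι) : X i * pderiv i f ∈ 1 ⊔ tangentialDivergences ι p := by
      have hdf : (pderiv i f).IsHomogeneous d := hf.pderiv
      have hXdf : (X i * pderiv i f).IsHomogeneous (1 + d) := (isHomogeneous_X ℝ i).mul hdf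
      refine X_mul_mem_one_sup_tangentialDivergences i hdf hd (ih (by omega) ?_)
      simpa using hXdf.pderiv (i := i)
    have euler : ((d + 1 : ℕ) : ℝ) • f ∈ 1 ⊔ tangentialDivergences ι p := by
      rw [Nat.cast_smul_eq_nsmul, ← hf.sum_X_mul_pderiv]
      exact Submodule.sum_mem _ fun i _ ↦ hterm i
    exact (Submodule.smul_mem_iff _ (by positivity)).1 euler

theorem exists_eq_C_add_mem_tangentialDivergences {p : ℕ} {q : MvPolynomial ι ℝ}
    (hq : q.totalDegree < p) :
    ∃ c : ℝ, ∃ r ∈ tangentialDivergences ι p, q = C c + r := by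
  have hmem : q ∈ 1 ⊔ tangentialDivergences ι p := by
    rw [← sum_homogeneousComponent q]
    refine Submodule.sum_mem _ fun d hd ↦ isHomogeneous_mem_one_sup_tangentialDivergences ?_
      (homogeneousComponent_isHomogeneous d q)
    exact (Nat.lt_succ_iff.1 (Finset.mem_range.1 hd)).trans_lt hq
  obtain ⟨_, h1, r, hr, rfl⟩ := Submodule.mem_sup.1 hmem
  obtain ⟨c, rfl⟩ := Submodule.mem_one.1 h1
  exact ⟨c, r, hr, rfl⟩

end Existence

theorem unique_orthogonal_decomposition_general {n p : ℕ} {q : MvPolynomial (Fin n) ℝ}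
    (hq : q.totalDegree < p) :
    (∃! cr : ℝ × MvPolynomial (Fin n) ℝ,
        cr.2 ∈ tangentialDivergences (Fin n) p ∧ q = C cr.1 + cr.2) ∧
    (∀ r ∈ tangentialDivergences (Fin n) p, ∫ x in cornerSimplex (Fin n), eval x r = 0) := by
  refine ⟨?_, fun r ↦ setIntegral_eval_eq_zero_of_mem_tangentialDivergences⟩
  obtain ⟨c, r, hr, rfl⟩ := exists_eq_C_add_mem_tangentialDivergences hq
  refine ⟨(c, r), ⟨hr, rfl⟩, ?_⟩
  rintro ⟨c', r'⟩ ⟨hr', heq : C c + r = C c' + r'⟩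
  have hC : C (c' - c) ∈ tangentialDivergences (Fin n) p := by
    rw [show C (c' - c) = r - r' by rw [C_sub]; linear_combination -heq]
    exact Submodule.sub_mem _ hr hr'
  obtain rfl : c' = c := sub_eq_zero.1 (eq_zero_of_C_mem_tangentialDivergences hC)
  rw [add_left_cancel heq]

theorem lam_zero (x : Fin 3 → ℝ) : lam 0 x = 1 - ∑ i, x i := by
  simp [lam, Fin.sum_univ_three, sub_sub]

theorem lam_succ (i : Fin 3) (x : Fin 3 → ℝ) : lam i.succ x = x i := by
  fin_cases i <;> rfl

theorem Ktet_eq_cornerSimplex : Ktet = cornerSimplex (Fin 3) := by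
  ext x
  rw [Ktet, cornerSimplex, Set.mem_ofPred_eq, Set.mem_ofPred_eq, Fin.forall_fin_succ, and_comm]
  simp only [lam_zero, lam_succ, sub_nonneg]

theorem sum_mul_normalK_zero (v : Fin 3 → ℝ) : ∑ i, v i * normalK 0 i = (∑ i, v i) / √3 := by
  simp [normalK, Finset.sum_mul, div_eq_mul_inv]

theorem sum_mul_normalK_succ (v : Fin 3 → ℝ) (j : Fin 3) :
    ∑ i, v i * normalK j.succ i = -v j := by
  fin_cases j <;> simp [normalK, Fin.sum_univ_three]

theorem normalVanish_iff_isTangential (Φ : Fin 3 → MvPolynomial (Fin 3) ℝ) :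
    normalVanish Φ ↔ IsTangential fun x i ↦ eval x (Φ i) := by
  have slanted (x : Fin 3 → ℝ) : ∑ i, eval x (Φ i) * normalK 0 i = 0 ↔ ∑ i, eval x (Φ i) = 0 := by
    rw [sum_mul_normalK_zero fun i ↦ eval x (Φ i), div_eq_zero_iff, or_iff_left (by positivity)]
  have coordinate (x : Fin 3 → ℝ) (j : Fin 3) :
      ∑ i, eval x (Φ i) * normalK j.succ i = 0 ↔ eval x (Φ j) = 0 := by
    rw [sum_mul_normalK_succ fun i ↦ eval x (Φ i), neg_eq_zero]
  rw [normalVanish, Fin.forall_fin_succ]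
  simp only [IsTangential, faceK, Set.mem_ofPred_eq, Ktet_eq_cornerSimplex, lam_zero, lam_succ,
    slanted, coordinate, sub_eq_zero, eq_comm (a := (1 : ℝ)), and_imp]
  exact ⟨fun h x hx ↦ ⟨fun i ↦ h.2 i x hx, h.1 x hx⟩,
    fun h ↦ ⟨fun x hx ↦ (h x hx).2, fun i x hx ↦ (h x hx).1 i⟩⟩

theorem setOf_divP_eq_tangentialDivergences (p : ℕ) :
    {q | ∃ Φ : Fin 3 → MvPolynomial (Fin 3) ℝ,
        (∀ i, (Φ i).totalDegree ≤ p) ∧ normalVanish Φ ∧ q = divP Φ} =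
      tangentialDivergences (Fin 3) p := by
  ext q
  constructor
  · rintro ⟨Φ, hdeg, hΦ, rfl⟩
    exact ⟨Φ, ⟨hdeg, (normalVanish_iff_isTangential Φ).1 hΦ⟩, polyDivergence_apply Φ⟩
  · rintro ⟨Φ, ⟨hdeg, hΦ⟩, rfl⟩
    exact ⟨Φ, hdeg, (normalVanish_iff_isTangential Φ).2 hΦ, polyDivergence_apply Φ⟩

/-- every q ∈ P_{p-1} has a unique decomposition q = c + r with c constant
and r ∈ D = div Σ; moreover ∫_K r dx = 0, so P_{p-1} = ℝ·1 ⊕ D orthogonally in L²(K). -/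
theorem unique_orthogonal_decomposition (p : ℕ) (hp : 1 ≤ p)
    (D : Set (MvPolynomial (Fin 3) ℝ))
    (hD : D = {q | ∃ Φ : Fin 3 → MvPolynomial (Fin 3) ℝ,
        (∀ i, (Φ i).totalDegree ≤ p) ∧ normalVanish Φ ∧ q = divP Φ})
    (q : MvPolynomial (Fin 3) ℝ) (hq : q.totalDegree ≤ p - 1) :
    (∃! cr : ℝ × MvPolynomial (Fin 3) ℝ,
        cr.2 ∈ D ∧ q = MvPolynomial.C cr.1 + cr.2) ∧
    (∀ c : ℝ, ∀ r ∈ D, q = MvPolynomial.C c + r →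
        ∫ x in Ktet, MvPolynomial.eval x r = 0) := by
  obtain ⟨hunique, hintegral⟩ :=
    unique_orthogonal_decomposition_general (n := 3) (p := p) (q := q) (by omega)
  simpa [hD, setOf_divP_eq_tangentialDivergences, Ktet_eq_cornerSimplex] using
    ⟨hunique, fun _ r hr _ ↦ hintegral r hr⟩
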